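/- Fix $\delta \in (0,10^{-10})$, $n_r = 10$, and $D > 0$. There exists a constant $C$ (depending only on $\delta$ and $D$) with the following property. Let $f$ be a classical solution of the relativistic Vlasov–Poisson system on $[0,T)$ such that $f(t, Rx, Rv) = f(t,x,v)$ for all $R \in SO(3)$, with $\|f(t,\cdot,\cdot)\|_{L^\infty} \le D$ and $\iint (1+|v|) f(t,x,v)\,dx\,dv \le D$ for all $t \in [0,T)$, and set $\tilde M(t) := (1+t)^{2 n_r} + \sup_{s \in [0,t]} \iint (1+|v|)^{n_r} f(s,x,v)\,dx\,dv$, assumed finite. Fix $t \in [0,T)$ and suppose $(X,V) : [0,t] \to \mathbb{R}^3 \times \mathbb{R}^3$ is a $C^1$ characteristic, i.e. $X'(s) = V(s)/\sqrt{1+|V(s)|^2}$ and $V'(s) = E(s, X(s))$. If $|X(0)| + |V(0)| \le \tilde M(t)^{1/(2 n_r)}$, then $|X(t)| \le C\, \tilde M(t)^{1/(2 n_r)}$ and $|V(t)| \le C\, \tilde M(t)^{(5+2\delta)/((6-2\delta)(n_r - 1))}$. -/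

import Mathlib

open MeasureTheory Real Set
noncomputable section

abbrev E3 := EuclideanSpace ℝ (Fin 3)

/-- The relativistic velocity `v̂ = v / √(1+|v|²)`. -/
def vhat (v : E3) : E3 := (Real.sqrt (1 + ‖v‖ ^ 2))⁻¹ • v

/-- The spatial density `ρ(t,x) = ∫ f(t,x,v) dv`. -/
def rvpRho (f : ℝ → E3 → E3 → ℝ) (t : ℝ) (x : E3) : ℝ := ∫ v, f t x v

/-- The electric field `E(t,x) = (4π)⁻¹ ∫ (x-y) ρ(t,y)/|x-y|³ dy`. -/
def rvpField (f : ℝ → E3 → E3 → ℝ) (t : ℝ) (x : E3) : E3 :=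
  (4 * Real.pi)⁻¹ • ∫ y, (rvpRho f t y / ‖x - y‖ ^ 3) • (x - y)

/-- `f` is a classical solution of the relativistic Vlasov–Poisson system on the
time interval `I`: it is nonnegative, `C¹`, and satisfies the transport equation
`∂ₜ f + v̂ ⋅ ∇ₓ f + E ⋅ ∇ᵥ f = 0` pointwise (phrased as the vanishing of the
derivative of `f` in the direction `(1, v̂, E(t,x))`). -/
def IsRVPSolution (I : Set ℝ) (f : ℝ → E3 → E3 → ℝ) : Prop :=
  (∀ t ∈ I, ∀ x v, 0 ≤ f t x v) ∧
  ContDiffOn ℝ 1 (fun p : ℝ × E3 × E3 => f p.1 p.2.1 p.2.2) (I ×ˢ (Set.univ : Set (E3 × E3))) ∧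
  ∀ t ∈ I, ∀ x v,
    fderivWithin ℝ (fun p : ℝ × E3 × E3 => f p.1 p.2.1 p.2.2)
      (I ×ˢ (Set.univ : Set (E3 × E3))) (t, x, v) (1, vhat v, rvpField f t x) = 0

/-- The `n_r`-th velocity moment `M_{n_r}(s)`, with `n_r = 10`. -/
def momentTen (f : ℝ → E3 → E3 → ℝ) (s : ℝ) : ℝ :=
  ∫ p : E3 × E3, (1 + ‖p.2‖) ^ (10 : ℕ) * f s p.1 p.2

/-- The enlarged moment `\tilde M^r(t) = (1+t)^{2 n_r} + sup_{s ∈ [0,t]} M_{n_r}(s)`. -/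
def tildeMr (f : ℝ → E3 → E3 → ℝ) (t : ℝ) : ℝ :=
  (1 + t) ^ (20 : ℕ) + sSup (momentTen f '' Set.Icc 0 t)

/-
Rotation invariance makes `ρ` radial, so by Newton's theorem the field is `m(|x|) x / (4π|x|³)`,
where `m(a)` is the mass inside the ball of radius `a`. The first and the `n`-th velocity moments
bound `m`, and with `N = M̃^(1/(n+3))` they give `|E(x)| ≲ (|x| + N⁻²)^(-3/2)`. This force is
repulsive, so `X · V` is nondecreasing along a characteristic: the particle is first incoming, while
its energy decreases, and then outgoing, while it gains at most the potential drop, which is `≲ N`.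
Hence `|V(t)| ≲ N`, and `1/(n+3)` is `1/13` for `n = 10`, below the claimed exponent. The bound on
`X` holds because the speed is at most `1` and `1 + t ≤ M̃^(1/(2n))`.
-/

section Rotations

variable {F : Type*} [NormedAddCommGroup F] [InnerProductSpace ℝ F]

lemma det_reflection_orthogonal_singleton [FiniteDimensional ℝ F] {w : F} (hw : w ≠ 0) :
    (Submodule.reflection (ℝ ∙ w)ᗮ).toLinearEquiv.det = -1 := by
  rw [Submodule.linearEquiv_det_reflection, Submodule.orthogonal_orthogonal,
    finrank_span_singleton hw, pow_one]

lemma exists_ne_zero_inner_eq_zero (hF : 1 < Module.finrank ℝ F) (x : F) :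
    ∃ w : F, w ≠ 0 ∧ inner ℝ w x = 0 := by
  have := Module.finite_of_finrank_pos (zero_lt_one.trans hF)
  have hspan : (ℝ ∙ x)ᗮ ≠ ⊥ := by
    intro hbot
    have hle := finrank_span_le_card (R := ℝ) ({x} : Set F)
    rw [Submodule.orthogonal_eq_bot_iff.1 hbot, finrank_top, toFinset_singleton,
      Finset.card_singleton] at hle
    exact hF.not_ge hle
  obtain ⟨w, hwx, hw⟩ := Submodule.exists_mem_ne_zero_of_ne_bot hspan
  exact ⟨w, hw, Submodule.mem_orthogonal_singleton_iff_inner_left.1 hwx⟩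

/- The reflection exchanging `x` and `y` has determinant `-1`; precomposing it with a hyperplane
reflection fixing `x` repairs the sign. -/
lemma exists_rotation_map_eq (hF : 1 < Module.finrank ℝ F) {x y : F} (hxy : ‖x‖ = ‖y‖) :
    ∃ R : F ≃ₗᵢ[ℝ] F, R.toLinearEquiv.det = 1 ∧ R x = y := by
  have := Module.finite_of_finrank_pos (zero_lt_one.trans hF)
  rcases eq_or_ne x y with rfl | hne
  · exact ⟨.refl ℝ F, map_one LinearEquiv.det, rfl⟩
  obtain ⟨w, hw, hwx⟩ := exists_ne_zero_inner_eq_zero hF x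
  refine ⟨(Submodule.reflection (ℝ ∙ w)ᗮ).trans (Submodule.reflection (ℝ ∙ (x - y))ᗮ), ?_, ?_⟩
  · calc _ = (Submodule.reflection (ℝ ∙ (x - y))ᗮ).toLinearEquiv.det *
          (Submodule.reflection (ℝ ∙ w)ᗮ).toLinearEquiv.det := map_mul LinearEquiv.det _ _
      _ = 1 := by
        rw [det_reflection_orthogonal_singleton hw,
          det_reflection_orthogonal_singleton (sub_ne_zero.2 hne), neg_mul_neg, one_mul]
  · have hfix : Submodule.reflection (ℝ ∙ w)ᗮ x = x :=
      Submodule.reflection_mem_subspace_eq_self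
        (Submodule.mem_orthogonal_singleton_iff_inner_right.2 hwx)
    rw [LinearIsometryEquiv.trans_apply, hfix, Submodule.reflection_sub hxy]

lemma eq_of_norm_eq_of_rotation_invariant {α : Type*} (hF : 1 < Module.finrank ℝ F) {g : F → α}
    (hg : ∀ R : F ≃ₗᵢ[ℝ] F, R.toLinearEquiv.det = 1 → ∀ x, g (R x) = g x) {x y : F}
    (hxy : ‖x‖ = ‖y‖) : g x = g y := by
  obtain ⟨R, hdet, rfl⟩ := exists_rotation_map_eq hF hxy
  exact (hg R hdet x).symm

end Rotations

section Archimedes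

lemma volume_sq_add_sq_le (b : ℝ) :
    volume {w : ℝ × ℝ | w.1 ^ 2 + w.2 ^ 2 ≤ b} = ENNReal.ofReal (π * max b 0) := by
  have hmeas : MeasurableSet {w : ℝ × ℝ | w.1 ^ 2 + w.2 ^ 2 ≤ b} :=
    measurableSet_le (by fun_prop) measurable_const
  rcases lt_or_ge b 0 with hb | hb
  · have hempty : {w : ℝ × ℝ | w.1 ^ 2 + w.2 ^ 2 ≤ b} = ∅ :=
      eq_empty_of_forall_notMem fun w hw => (hb.trans_le (by positivity)).not_ge hw
    rw [hempty, measure_empty, max_eq_right hb.le, mul_zero, ENNReal.ofReal_zero]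
  · have hball : Complex.measurableEquivRealProd ⁻¹' {w : ℝ × ℝ | w.1 ^ 2 + w.2 ^ 2 ≤ b}
        = Metric.closedBall (0 : ℂ) (√b) := by
      ext w
      rw [mem_preimage, mem_ofPred_eq, mem_closedBall_zero_iff, Complex.norm_def,
        Real.sqrt_le_sqrt_iff hb, Complex.normSq_apply, Complex.measurableEquivRealProd_apply,
        pow_two, pow_two]
    rw [← Complex.volume_preserving_equiv_real_prod.measure_preimage hmeas.nullMeasurableSet,
      hball, Complex.volume_closedBall, ← ENNReal.ofReal_pow (Real.sqrt_nonneg b),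
      Real.sq_sqrt hb, max_eq_left hb, mul_comm π, ENNReal.ofReal_mul hb, ← NNReal.coe_real_pi,
      ENNReal.ofReal_coe_nnreal]

lemma volume_sq_add_sq_preimage_Ioc {a b : ℝ} (hab : a < b) :
    volume ((fun w : ℝ × ℝ => w.1 ^ 2 + w.2 ^ 2) ⁻¹' Ioc a b)
      = ENNReal.ofReal (π * max b 0 - π * max a 0) := by
  have hdiff : (fun w : ℝ × ℝ => w.1 ^ 2 + w.2 ^ 2) ⁻¹' Ioc a b
      = {w | w.1 ^ 2 + w.2 ^ 2 ≤ b} \ {w | w.1 ^ 2 + w.2 ^ 2 ≤ a} := by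
    ext w
    simp [and_comm]
  have hsub : {w : ℝ × ℝ | w.1 ^ 2 + w.2 ^ 2 ≤ a} ⊆ {w | w.1 ^ 2 + w.2 ^ 2 ≤ b} :=
    fun w hw => le_trans hw hab.le
  have hmeas : MeasurableSet {w : ℝ × ℝ | w.1 ^ 2 + w.2 ^ 2 ≤ a} :=
    measurableSet_le (by fun_prop) measurable_const
  rw [hdiff, measure_sdiff hsub hmeas.nullMeasurableSet (by simp [volume_sq_add_sq_le]),
    volume_sq_add_sq_le, volume_sq_add_sq_le, ENNReal.ofReal_sub _ (by positivity)]

lemma measurePreserving_sq_add_sq : MeasurePreserving (fun w : ℝ × ℝ => w.1 ^ 2 + w.2 ^ 2) volume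
    (ENNReal.ofReal π • volume.restrict (Ioi (0 : ℝ))) := by
  have hmeas : Measurable (fun w : ℝ × ℝ => w.1 ^ 2 + w.2 ^ 2) := by fun_prop
  have hmap {a b : ℝ} (hab : a < b) :
      (Measure.map (fun w : ℝ × ℝ => w.1 ^ 2 + w.2 ^ 2) volume) (Ioc a b)
        = ENNReal.ofReal (π * max b 0 - π * max a 0) := by
    rw [Measure.map_apply hmeas measurableSet_Ioc, volume_sq_add_sq_preimage_Ioc hab]
  refine ⟨hmeas, Measure.ext_of_Ioc' _ _ (fun a b hab => ?_) (fun a b hab => ?_)⟩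
  · rw [hmap hab]
    exact ENNReal.ofReal_ne_top
  · rw [hmap hab, Measure.smul_apply, Measure.restrict_apply measurableSet_Ioc, Ioc_inter_Ioi,
      Real.volume_Ioc, smul_eq_mul, ← ENNReal.ofReal_mul pi_pos.le, ← mul_sub]
    rcases le_total b 0 with hb | hb
    · rw [max_eq_right hb, max_eq_right (hab.le.trans hb), sub_self, mul_zero,
        ENNReal.ofReal_zero, ENNReal.ofReal_of_nonpos]
      exact mul_nonpos_of_nonneg_of_nonpos pi_pos.le (sub_nonpos.2 hb)
    · rw [max_eq_left hb]

lemma measurePreserving_fst_sq_add_sq_add_sq :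
    MeasurePreserving (fun p : ℝ × ℝ × ℝ => (p.1, p.1 ^ 2 + (p.2.1 ^ 2 + p.2.2 ^ 2))) volume
      (ENNReal.ofReal π • volume.restrict {p : ℝ × ℝ | p.1 ^ 2 < p.2}) := by
  have hdisc : MeasurePreserving (fun p : ℝ × ℝ × ℝ => (p.1, p.2.1 ^ 2 + p.2.2 ^ 2)) volume
      (ENNReal.ofReal π • (volume : Measure (ℝ × ℝ)).restrict (univ ×ˢ Ioi (0 : ℝ))) := by
    have hprod := (MeasurePreserving.id (volume : Measure ℝ)).prod measurePreserving_sq_add_sq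
    rwa [Measure.prod_smul_right, ← Measure.restrict_univ (μ := (volume : Measure ℝ)),
      Measure.prod_restrict, Measure.restrict_univ] at hprod
  have hshear : MeasurePreserving (fun p : ℝ × ℝ => (p.1, p.1 ^ 2 + p.2)) :=
    (MeasurePreserving.id (volume : Measure ℝ)).skew_product
      (g := fun a b => a ^ 2 + b) (by fun_prop)
      (.of_forall fun a => (measurePreserving_add_left volume (a ^ 2)).map_eq)
  have hpre : (fun p : ℝ × ℝ => (p.1, p.1 ^ 2 + p.2)) ⁻¹' {p | p.1 ^ 2 < p.2}
      = univ ×ˢ Ioi (0 : ℝ) := by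
    ext p
    simp
  have hshear_restrict := hshear.restrict_preimage (s := {p | p.1 ^ 2 < p.2})
    (measurableSet_lt (by fun_prop) (by fun_prop))
  rw [hpre] at hshear_restrict
  exact (hshear_restrict.smul_measure (ENNReal.ofReal π)).comp hdisc

/- Archimedes' hat-box theorem: the height is uniformly distributed on each sphere, so the joint
law of height and squared radius has constant density. -/
lemma measurePreserving_inner_normSq {u : E3} (hu : ‖u‖ = 1) :
    MeasurePreserving (fun y : E3 => (inner ℝ u y, ‖y‖ ^ 2)) volume
      (ENNReal.ofReal π • volume.restrict {p : ℝ × ℝ | p.1 ^ 2 < p.2}) := by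
  obtain ⟨R, -, hR⟩ := exists_rotation_map_eq (by simp) (x := u)
    (y := EuclideanSpace.single 0 1) (by simp [hu])
  have hcoord := ((MeasurePreserving.id (volume : Measure ℝ)).prod
    (volume_preserving_finTwoArrow ℝ)).comp
    ((volume_preserving_piFinSuccAbove (fun _ : Fin 3 => ℝ) 0).comp
      ((EuclideanSpace.volume_preserving_symm_measurableEquiv_toLp (Fin 3)).comp
        R.measurePreserving))
  suffices hcomp : (fun y : E3 => (inner ℝ u y, ‖y‖ ^ 2)) = _ from
    hcomp ▸ measurePreserving_fst_sq_add_sq_add_sq.comp hcoord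
  funext y
  have hinner : inner ℝ u y = R y 0 := by
    rw [← R.inner_map_map, hR]
    simp [EuclideanSpace.inner_single_left]
  have hnorm : ‖y‖ ^ 2 = R y 0 ^ 2 + (R y 1 ^ 2 + R y 2 ^ 2) := by
    rw [← R.norm_map, EuclideanSpace.norm_sq_eq, Fin.sum_univ_three]
    simp [add_assoc]
  rw [hinner, hnorm]
  rfl

lemma integral_indicator_sq_lt (q : ℝ) (k : ℝ → ℝ) :
    ∫ z, {z : ℝ | z ^ 2 < q}.indicator k z = ∫ z in -√q..√q, k z := by
  have hset : {z : ℝ | z ^ 2 < q} = Ioo (-√q) (√q) := by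
    ext z
    rw [mem_ofPred_eq, mem_Ioo, ← abs_lt, Real.lt_sqrt (abs_nonneg z), sq_abs]
  rw [hset, integral_indicator measurableSet_Ioo, ← integral_Ioc_eq_integral_Ioo,
    intervalIntegral.integral_of_le (neg_le_self (Real.sqrt_nonneg q))]

/- For `q < 0` the convention `√q = 0` makes the inner integral vanish. -/
lemma integral_comp_inner_normSq {u : E3} (hu : ‖u‖ = 1) {k : ℝ × ℝ → ℝ} (hk : Measurable k)
    (hint : Integrable (fun y : E3 => k (inner ℝ u y, ‖y‖ ^ 2))) :
    ∫ y : E3, k (inner ℝ u y, ‖y‖ ^ 2) = π * ∫ q, ∫ z in -√q..√q, k (z, q) := by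
  have hpush := measurePreserving_inner_normSq hu
  have hmeas : MeasurableSet {p : ℝ × ℝ | p.1 ^ 2 < p.2} :=
    measurableSet_lt (by fun_prop) (by fun_prop)
  have hind : Integrable ({p : ℝ × ℝ | p.1 ^ 2 < p.2}.indicator k) := by
    have hint' := (hpush.integrable_comp hk.aestronglyMeasurable).1 hint
    rw [integrable_smul_measure (by simpa using pi_pos) ENNReal.ofReal_ne_top] at hint'
    exact (integrable_indicator_iff hmeas).2 hint'
  calc ∫ y : E3, k (inner ℝ u y, ‖y‖ ^ 2)
      = π * ∫ p, {p : ℝ × ℝ | p.1 ^ 2 < p.2}.indicator k p := by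
        rw [← integral_map hpush.measurable.aemeasurable hk.aestronglyMeasurable, hpush.map_eq,
          integral_smul_measure, ENNReal.toReal_ofReal pi_pos.le, integral_indicator hmeas,
          smul_eq_mul]
    _ = π * ∫ q, ∫ z, {z : ℝ | z ^ 2 < q}.indicator (fun z => k (z, q)) z := by
        rw [Measure.volume_eq_prod, integral_prod_symm _ hind]
        rfl
    _ = π * ∫ q, ∫ z in -√q..√q, k (z, q) := by
        simp only [integral_indicator_sq_lt]

end Archimedes

section Newton

/-- The field `(4π)⁻¹ ∫ (x - y) ρ(y) / |x - y|³ dy` generated by a charge density `ρ`. It is the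
time-independent form of `rvpField`. -/
def coulombField (ρ : E3 → ℝ) (x : E3) : E3 :=
  (4 * π)⁻¹ • ∫ y, (ρ y / ‖x - y‖ ^ 3) • (x - y)

lemma hasDerivAt_shell_primitive {a s z : ℝ} (ha : 0 < a)
    (hz : 0 < a ^ 2 + s ^ 2 - 2 * a * z) :
    HasDerivAt (fun z => (a * z - s ^ 2) / (a * √(a ^ 2 + s ^ 2 - 2 * a * z)))
      (a * (a - z) / √(a ^ 2 + s ^ 2 - 2 * a * z) ^ 3) z := by
  have hlin : HasDerivAt (fun z : ℝ => a ^ 2 + s ^ 2 - 2 * a * z) (-(2 * a)) z := by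
    simpa using ((hasDerivAt_id z).const_mul (2 * a)).const_sub (a ^ 2 + s ^ 2)
  have hnum : HasDerivAt (fun z : ℝ => a * z - s ^ 2) a z := by
    simpa using ((hasDerivAt_id z).const_mul a).sub_const (s ^ 2)
  have hpos : 0 < √(a ^ 2 + s ^ 2 - 2 * a * z) := Real.sqrt_pos.2 hz
  refine (hnum.div ((hlin.sqrt hz.ne').const_mul a) (by positivity)).congr_deriv ?_
  have hsq := Real.sq_sqrt hz.le
  generalize √(a ^ 2 + s ^ 2 - 2 * a * z) = r at hpos hsq
  field_simp
  rw [hsq]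
  ring

/- Newton's shell computation: the sphere of radius `s` acts on a point at distance `a` as if
concentrated at its centre when `s < a`, and not at all when `s > a`. -/
lemma integral_shell {a s : ℝ} (ha : 0 < a) (hs : 0 ≤ s) (hne : s ≠ a) :
    ∫ z in -s..s, a * (a - z) / √(a ^ 2 + s ^ 2 - 2 * a * z) ^ 3
      = if s < a then 2 * s / a else 0 := by
  have hpos : ∀ z ∈ uIcc (-s) s, 0 < a ^ 2 + s ^ 2 - 2 * a * z := by
    intro z hz
    rw [uIcc_of_le (neg_le_self hs)] at hz
    have hsq : 0 < (a - s) ^ 2 := sq_pos_of_ne_zero (sub_ne_zero.2 hne.symm)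
    nlinarith [hz.2]
  have hcont : ContinuousOn (fun z => a * (a - z) / √(a ^ 2 + s ^ 2 - 2 * a * z) ^ 3)
      (uIcc (-s) s) :=
    .div (by fun_prop) (by fun_prop) fun z hz => (pow_pos (Real.sqrt_pos.2 (hpos z hz)) 3).ne'
  rw [intervalIntegral.integral_eq_sub_of_hasDerivAt
      (fun z hz => hasDerivAt_shell_primitive ha (hpos z hz)) hcont.intervalIntegrable,
    show a ^ 2 + s ^ 2 - 2 * a * s = (a - s) ^ 2 by ring,
    show a ^ 2 + s ^ 2 - 2 * a * (-s) = (a + s) ^ 2 by ring, Real.sqrt_sq_eq_abs,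
    Real.sqrt_sq (by positivity)]
  split_ifs with hlt
  · rw [abs_of_pos (sub_pos.2 hlt)]
    have := sub_ne_zero.2 hne.symm
    field_simp
    ring
  · have hlt' : a < s := lt_of_le_of_ne (not_lt.1 hlt) hne.symm
    rw [abs_of_neg (sub_neg.2 hlt')]
    have := sub_ne_zero.2 hne.symm
    field_simp
    ring

lemma integral_coulomb_slice {a q : ℝ} (ha : 0 < a) (hq : q ≠ a ^ 2) (g : ℝ → ℝ) :
    ∫ z in -√q..√q, g q * (a * (a - z) / √(a ^ 2 + q - 2 * a * z) ^ 3)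
      = a⁻¹ * ∫ _ in -√q..√q, (Iio (a ^ 2)).indicator g q := by
  rcases lt_or_ge q 0 with hneg | hnonneg
  · simp [Real.sqrt_eq_zero_of_nonpos hneg.le]
  obtain ⟨s, hs, rfl⟩ : ∃ s, 0 ≤ s ∧ q = s ^ 2 :=
    ⟨√q, Real.sqrt_nonneg q, (Real.sq_sqrt hnonneg).symm⟩
  have hne : s ≠ a := fun h => hq (congrArg (· ^ 2) h)
  rw [Real.sqrt_sq hs, intervalIntegral.integral_const_mul, integral_shell ha hs hne,
    intervalIntegral.integral_const, indicator_apply]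
  simp only [mem_Iio, sq_lt_sq₀ hs ha.le]
  split_ifs
  · rw [smul_eq_mul]
    ring
  · simp

lemma inner_integral_coulomb_kernel {ρ : E3 → ℝ} {g : ℝ → ℝ} (hg : Measurable g)
    (hρ : ∀ y, ρ y = g (‖y‖ ^ 2)) (hint : Integrable ρ) {x : E3} (hx : x ≠ 0)
    (hker : Integrable fun y => (ρ y / ‖x - y‖ ^ 3) • (x - y)) :
    inner ℝ x (∫ y, (ρ y / ‖x - y‖ ^ 3) • (x - y))
      = ‖x‖⁻¹ * ∫ y in Metric.ball 0 ‖x‖, ρ y := by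
  set a := ‖x‖ with ha_def
  have ha : 0 < a := norm_pos_iff.2 hx
  let u : E3 := a⁻¹ • x
  have hu : ‖u‖ = 1 := norm_smul_inv_norm hx
  have hinner (y : E3) : inner ℝ x y = a * inner ℝ u y := by
    rw [real_inner_smul_left, mul_inv_cancel_left₀ ha.ne']
  have hdist (y : E3) : ‖x - y‖ = √(a ^ 2 + ‖y‖ ^ 2 - 2 * a * inner ℝ u y) := by
    rw [← Real.sqrt_sq (norm_nonneg (x - y)), norm_sub_sq_real, hinner, ← ha_def]
    congr 1
    ring
  let kernel : ℝ × ℝ → ℝ := fun p => g p.2 * (a * (a - p.1) / √(a ^ 2 + p.2 - 2 * a * p.1) ^ 3)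
  let inside : ℝ × ℝ → ℝ := fun p => (Iio (a ^ 2)).indicator g p.2
  have hkernel (y : E3) : inner ℝ x ((ρ y / ‖x - y‖ ^ 3) • (x - y))
      = kernel (inner ℝ u y, ‖y‖ ^ 2) := by
    rw [inner_smul_right, inner_sub_right, real_inner_self_eq_norm_sq, hinner, hdist, hρ,
      ← ha_def]
    ring
  have hinside (y : E3) : (Metric.ball (0 : E3) a).indicator ρ y
      = inside (inner ℝ u y, ‖y‖ ^ 2) := by
    simp only [inside, indicator, mem_ball_zero_iff, mem_Iio, hρ, sq_lt_sq₀ (norm_nonneg y) ha.le]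
  have hkernel_int := hker.const_inner (𝕜 := ℝ) x
  have hinside_int := hint.indicator (measurableSet_ball (x := (0 : E3)) (ε := a))
  rw [← integral_inner hker, ← integral_indicator measurableSet_ball]
  simp only [hkernel, funext hinside] at hkernel_int hinside_int ⊢
  rw [integral_comp_inner_normSq hu (by fun_prop) hkernel_int,
    integral_comp_inner_normSq (k := inside) hu
      ((hg.indicator measurableSet_Iio).comp measurable_snd) hinside_int, mul_left_comm,
    ← integral_const_mul a⁻¹]
  refine congrArg (π * ·) (integral_congr_ae ?_)
  filter_upwards [compl_mem_ae_iff.2 (measure_singleton (μ := volume) (a ^ 2))] with q hq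
  exact integral_coulomb_slice ha hq g

lemma integral_coulomb_kernel_map {ρ : E3 → ℝ} (R : E3 ≃ₗᵢ[ℝ] E3) (hρ : ∀ y, ρ (R y) = ρ y)
    (x : E3) : ∫ y, (ρ y / ‖R x - y‖ ^ 3) • (R x - y) = R (∫ y, (ρ y / ‖x - y‖ ^ 3) • (x - y)) := by
  rw [← R.measurePreserving.integral_comp R.toHomeomorph.measurableEmbedding]
  simp only [hρ, ← map_sub, R.norm_map, ← map_smul]
  exact R.toContinuousLinearEquiv.integral_comp_comm _

/- The field is fixed by the rotation by `π` about the axis `ℝ x`. -/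
lemma exists_coulombField_eq_smul {ρ : E3 → ℝ} (hρ : ∀ x y, ‖x‖ = ‖y‖ → ρ x = ρ y) (x : E3) :
    ∃ e : ℝ, coulombField ρ x = e • x := by
  let R := Submodule.reflection (ℝ ∙ x)
  have hRx : R x = x :=
    Submodule.reflection_mem_subspace_eq_self (Submodule.mem_span_singleton_self x)
  have hfix : R (coulombField ρ x) = coulombField ρ x := by
    rw [coulombField, map_smul,
      ← integral_coulomb_kernel_map R (fun y => hρ _ _ (R.norm_map y)), hRx]
  obtain ⟨e, he⟩ := Submodule.mem_span_singleton.1 ((Submodule.reflection_eq_self_iff _).1 hfix)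
  exact ⟨e, he.symm⟩

lemma coulombField_eq_smul_of_radial {ρ : E3 → ℝ} (hmeas : Measurable ρ)
    (hrad : ∀ x y, ‖x‖ = ‖y‖ → ρ x = ρ y) (hint : Integrable ρ) {x : E3}
    (hker : Integrable fun y => (ρ y / ‖x - y‖ ^ 3) • (x - y)) :
    coulombField ρ x = ((∫ y in Metric.ball 0 ‖x‖, ρ y) / (4 * π * ‖x‖ ^ 3)) • x := by
  obtain ⟨e, he⟩ := exists_coulombField_eq_smul hrad x
  rcases eq_or_ne x 0 with rfl | hx
  · simpa using he
  have hnorm : ‖x‖ ≠ 0 := norm_ne_zero_iff.2 hx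
  let u : E3 := EuclideanSpace.single 0 1
  let g : ℝ → ℝ := fun q => ρ (√q • u)
  have hg : Measurable g := hmeas.comp (by fun_prop)
  have hρg (y : E3) : ρ y = g (‖y‖ ^ 2) := hrad _ _ (by simp [u, norm_smul])
  have hinner : e * ‖x‖ ^ 2 = (4 * π)⁻¹ * (‖x‖⁻¹ * ∫ y in Metric.ball 0 ‖x‖, ρ y) := by
    rw [← inner_integral_coulomb_kernel hg hρg hint hx hker, ← inner_smul_right,
      ← coulombField, he, inner_smul_right, real_inner_self_eq_norm_sq]
  rw [he]
  congr 1
  field_simp at hinner ⊢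
  linear_combination hinner

end Newton

section VelocityMoments

variable {F : Type*} [NormedAddCommGroup F] [MeasureSpace F]

/-- The `n`-th velocity moment `∬ (1 + |v|)ⁿ g(x, v) dx dv` of a phase-space density `g`;
`momentTen f s` is `velocityMoment 10 (f s)`. -/
def velocityMoment (n : ℕ) (g : F → F → ℝ) : ℝ :=
  ∫ p : F × F, (1 + ‖p.2‖) ^ n * g p.1 p.2

/-- Phase-space densities with values in `[0, D]` and a finite `n`-th velocity moment. Finiteness
of the moment is expressed by integrability, so that `velocityMoment n g` is not a junk value. -/
structure IsMomentDensity (n : ℕ) (D : ℝ) (g : F → F → ℝ) : Prop where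
  measurable : Measurable fun p : F × F => g p.1 p.2
  nonneg : ∀ x v, 0 ≤ g x v
  le_bound : ∀ x v, g x v ≤ D
  integrable_moment : Integrable fun p : F × F => (1 + ‖p.2‖) ^ n * g p.1 p.2

namespace IsMomentDensity

variable {m n : ℕ} {D : ℝ} {g : F → F → ℝ}

lemma velocityMoment_nonneg (hg : IsMomentDensity n D g) : 0 ≤ velocityMoment n g :=
  integral_nonneg fun p => mul_nonneg (by positivity) (hg.nonneg _ _)

lemma measurable_density [SFinite (volume : Measure F)] (hg : IsMomentDensity n D g) :
    Measurable fun x => ∫ v, g x v :=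
  hg.measurable.stronglyMeasurable.integral_prod_right'.measurable

variable [BorelSpace F]

lemma of_le (hg : IsMomentDensity n D g) (hmn : m ≤ n) : IsMomentDensity m D g where
  measurable := hg.measurable
  nonneg := hg.nonneg
  le_bound := hg.le_bound
  integrable_moment := by
    have hmeas := hg.measurable
    refine hg.integrable_moment.mono (by fun_prop) (.of_forall fun p => ?_)
    have h1 : 1 ≤ 1 + ‖p.2‖ := le_add_of_nonneg_right (norm_nonneg _)
    rw [norm_mul, norm_mul, norm_pow, norm_pow, Real.norm_of_nonneg (zero_le_one.trans h1)]
    gcongr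

lemma integrable (hg : IsMomentDensity n D g) : Integrable fun p : F × F => g p.1 p.2 := by
  simpa using (hg.of_le n.zero_le).integrable_moment

section SFinite

variable [SFinite (volume : Measure F)]

lemma integrable_density (hg : IsMomentDensity n D g) : Integrable fun x => ∫ v, g x v :=
  hg.integrable.integral_prod_left

lemma setIntegral_density (hg : IsMomentDensity n D g) (s : Set F) :
    ∫ x in s, ∫ v, g x v = ∫ p in s ×ˢ univ, g p.1 p.2 := by
  rw [Measure.volume_eq_prod, setIntegral_prod _ hg.integrable.integrableOn,
    Measure.restrict_univ]

lemma setIntegral_density_le_velocityMoment (hg : IsMomentDensity n D g) (s : Set F) :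
    ∫ x in s, ∫ v, g x v ≤ velocityMoment n g := by
  have hmass : ∫ p in s ×ˢ univ, g p.1 p.2 ≤ ∫ p : F × F, g p.1 p.2 :=
    setIntegral_le_integral hg.integrable (.of_forall fun p => hg.nonneg p.1 p.2)
  rw [hg.setIntegral_density]
  refine hmass.trans (integral_mono hg.integrable hg.integrable_moment fun p => ?_)
  exact le_mul_of_one_le_left (hg.nonneg _ _)
    (one_le_pow₀ (le_add_of_nonneg_right (norm_nonneg _)))

end SFinite

lemma setIntegral_le_velocityMoment (hg : IsMomentDensity n D g) {P : ℝ} (hP : 0 < P)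
    {s : Set (F × F)} (hs : MeasurableSet s) (hsP : ∀ p ∈ s, P ≤ ‖p.2‖) :
    ∫ p in s, g p.1 p.2 ≤ (P ^ n)⁻¹ * velocityMoment n g := by
  have hint := hg.integrable_moment.const_mul (P ^ n)⁻¹
  have hnonneg (p : F × F) : 0 ≤ (P ^ n)⁻¹ * ((1 + ‖p.2‖) ^ n * g p.1 p.2) := by
    have := hg.nonneg p.1 p.2
    positivity
  rw [velocityMoment, ← integral_const_mul]
  refine (setIntegral_mono_on hg.integrable.integrableOn hint.integrableOn hs fun p hp => ?_).trans
    (setIntegral_le_integral hint (.of_forall hnonneg))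
  rw [le_inv_mul_iff₀ (by positivity)]
  have hPv : P ≤ 1 + ‖p.2‖ := (hsP p hp).trans (le_add_of_nonneg_left zero_le_one)
  gcongr
  exact hg.nonneg _ _

variable [NormedSpace ℝ F] [FiniteDimensional ℝ F] [(volume : Measure F).IsAddHaarMeasure]

lemma setIntegral_ball_prod_ball_le (hg : IsMomentDensity n D g) {a P : ℝ} (ha : 0 < a)
    (hP : 0 < P) :
    ∫ p in Metric.ball 0 a ×ˢ Metric.ball 0 P, g p.1 p.2
      ≤ D * volume.real (Metric.ball (0 : F) 1) ^ 2 * (a * P) ^ Module.finrank ℝ F := by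
  have := FiniteDimensional.proper ℝ F
  have hball {r : ℝ} (hr : 0 < r) : volume.real (Metric.ball (0 : F) r)
      = r ^ Module.finrank ℝ F * volume.real (Metric.ball (0 : F) 1) := by
    rw [measureReal_def, Measure.addHaar_ball_of_pos _ _ hr, ENNReal.toReal_mul,
      ENNReal.toReal_ofReal (by positivity), measureReal_def]
  have hfin : volume (Metric.ball (0 : F) a ×ˢ Metric.ball (0 : F) P) < ⊤ := by
    rw [Measure.volume_eq_prod, Measure.prod_prod]
    exact ENNReal.mul_lt_top measure_ball_lt_top measure_ball_lt_top
  calc ∫ p in Metric.ball 0 a ×ˢ Metric.ball 0 P, g p.1 p.2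
      ≤ D * volume.real (Metric.ball (0 : F) a ×ˢ Metric.ball (0 : F) P) :=
        (le_abs_self _).trans (norm_setIntegral_le_of_norm_le_const hfin fun p _ =>
          (Real.norm_of_nonneg (hg.nonneg _ _)).trans_le (hg.le_bound _ _))
    _ = D * volume.real (Metric.ball (0 : F) 1) ^ 2 * (a * P) ^ Module.finrank ℝ F := by
        rw [Measure.volume_eq_prod, measureReal_prod_prod, hball ha, hball hP]
        ring

lemma setIntegral_density_ball_le (hg : IsMomentDensity n D g) {a P : ℝ} (ha : 0 < a)
    (hP : 0 < P) :
    ∫ x in Metric.ball 0 a, ∫ v, g x v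
      ≤ D * volume.real (Metric.ball (0 : F) 1) ^ 2 * (a * P) ^ Module.finrank ℝ F
        + (P ^ n)⁻¹ * velocityMoment n g := by
  have hsplit : (Metric.ball 0 a ×ˢ univ : Set (F × F))
      = Metric.ball 0 a ×ˢ Metric.ball 0 P ∪ Metric.ball 0 a ×ˢ (Metric.ball 0 P)ᶜ := by
    rw [← prod_union, union_compl_self]
  have hmeas : MeasurableSet (Metric.ball (0 : F) a ×ˢ (Metric.ball (0 : F) P)ᶜ) :=
    measurableSet_ball.prod measurableSet_ball.compl
  rw [hg.setIntegral_density, hsplit, setIntegral_union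
    (disjoint_compl_right.set_prod_right _ _) hmeas hg.integrable.integrableOn
    hg.integrable.integrableOn]
  refine add_le_add (hg.setIntegral_ball_prod_ball_le ha hP)
    (hg.setIntegral_le_velocityMoment hP hmeas fun p hp => ?_)
  simpa using hp.2

end IsMomentDensity

end VelocityMoments

section KernelIntegrability

/- Where the moment weight `w ^ n` does not dominate `r ^ (-q)`, one has `r < 1` and
`w < r ^ (-q / n)`, which trades powers of `r` for the decay `w ^ (-p)`. -/
lemma rpow_neg_mul_le_indicator_add_pow_mul {n : ℕ} (hn : n ≠ 0) {p q r w y D : ℝ} (hp : 0 ≤ p)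
    (hq : 0 < q) (hr : 0 ≤ r) (hw : 1 ≤ w) (hy : 0 ≤ y) (hyD : y ≤ D) :
    r ^ (-q) * y
      ≤ D * ((Iio 1).indicator (fun r => r ^ (-(q + q / n * p))) r * w ^ (-p)) + w ^ n * y := by
  have hD : 0 ≤ D := hy.trans hyD
  have hw0 : 0 < w := zero_lt_one.trans_le hw
  rcases le_or_gt (r ^ (-q)) (w ^ n) with hle | hlt
  · have hind : 0 ≤ (Iio 1).indicator (fun r => r ^ (-(q + q / n * p))) r :=
      indicator_apply_nonneg fun _ => Real.rpow_nonneg hr _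
    calc r ^ (-q) * y ≤ w ^ n * y := by gcongr
      _ ≤ _ := le_add_of_nonneg_left (by positivity)
  have hrpos : 0 < r := hr.lt_of_ne' fun h => by
    rw [h, Real.zero_rpow (neg_ne_zero.2 hq.ne')] at hlt
    exact hlt.not_ge (by positivity)
  have hr1 : r < 1 := by
    by_contra! h1
    exact hlt.not_ge ((Real.rpow_le_one_of_one_le_of_nonpos h1 (by linarith)).trans
      (one_le_pow₀ hw))
  have hwr : w ≤ r ^ (-(q / n)) := by
    have := Real.rpow_le_rpow (by positivity) hlt.le (by positivity : (0 : ℝ) ≤ (n : ℝ)⁻¹)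
    rwa [Real.pow_rpow_inv_natCast hw0.le hn, ← Real.rpow_mul hr, neg_mul, ← div_eq_mul_inv] at this
  have htrade : r ^ (-q) ≤ r ^ (-(q + q / n * p)) * w ^ (-p) := by
    rw [Real.rpow_neg hw0.le, ← div_eq_mul_inv, le_div_iff₀ (by positivity), neg_add,
      Real.rpow_add hrpos, ← neg_mul, Real.rpow_mul hr]
    gcongr
  rw [indicator_of_mem (mem_Iio.2 hr1)]
  calc r ^ (-q) * y ≤ (r ^ (-(q + q / n * p)) * w ^ (-p)) * D := by gcongr
    _ = D * (r ^ (-(q + q / n * p)) * w ^ (-p)) := mul_comm _ _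
    _ ≤ _ := le_add_of_nonneg_right (by positivity)

namespace IsMomentDensity

variable {F : Type*} [NormedAddCommGroup F] [NormedSpace ℝ F] [FiniteDimensional ℝ F]
  [MeasureSpace F] [BorelSpace F] [(volume : Measure F).IsAddHaarMeasure]
  {n : ℕ} {D : ℝ}

lemma integrable_rpow_norm_sub_mul {g : F → F → ℝ} (hg : IsMomentDensity n D g) {q : ℝ}
    (hq : 0 < q) (hqn : q * (n + Module.finrank ℝ F) < n * Module.finrank ℝ F) (x : F) :
    Integrable fun p : F × F => ‖x - p.1‖ ^ (-q) * g p.1 p.2 := by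
  have := FiniteDimensional.proper ℝ F
  set d : ℝ := (Module.finrank ℝ F : ℝ)
  have hd0 : 0 ≤ d := Nat.cast_nonneg _
  have hnd : 0 < n * d := lt_of_le_of_lt (by positivity) hqn
  have hn : (0 : ℝ) < n := pos_of_mul_pos_left hnd hd0
  have hdim : 1 ≤ Module.finrank ℝ F := Nat.cast_pos.1 (pos_of_mul_pos_right hnd hn.le)
  obtain ⟨p, hdp, hpq⟩ : ∃ p, d < p ∧ p < (n * d - q * n) / q :=
    exists_between ((lt_div_iff₀ hq).2 (by linarith))
  have hs : q + q / n * p < d := by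
    rw [lt_div_iff₀ hq] at hpq
    rw [← mul_lt_mul_iff_of_pos_left hn]
    field_simp
    linarith
  set s : ℝ := q + q / n * p
  have hx : Integrable fun y : F => (Iio 1).indicator (fun r => r ^ (-s)) ‖x - y‖ := by
    have hball : IntegrableOn (fun y : F => ‖y‖ ^ (-s)) (Metric.ball 0 1) :=
      integrableOn_ball_of_norm_le_rpow (C := 1) hdim hs
        (.of_forall fun y => by rw [one_mul, Real.norm_of_nonneg (by positivity)])
        (by fun_prop : Measurable fun y : F => ‖y‖ ^ (-s)).aestronglyMeasurable
    refine ((hball.integrable_indicator measurableSet_ball).comp_sub_left x).congr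
      (.of_forall fun y => ?_)
    simp only [indicator, mem_ball_zero_iff, mem_Iio]
  have hv : Integrable fun v : F => (1 + ‖v‖) ^ (-p) := integrable_one_add_norm hdp
  have hmeas := hg.measurable
  refine (((hx.mul_prod hv).const_mul D).add hg.integrable_moment).mono' (by fun_prop)
    (.of_forall fun z => ?_)
  have hz := hg.nonneg z.1 z.2
  rw [Real.norm_of_nonneg (by positivity)]
  exact rpow_neg_mul_le_indicator_add_pow_mul (Nat.cast_pos.1 hn).ne' (hd0.trans hdp.le) hq
    (norm_nonneg _) (le_add_of_nonneg_right (norm_nonneg _)) hz (hg.le_bound _ _)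

lemma integrable_coulomb_kernel {g : E3 → E3 → ℝ} (hg : IsMomentDensity n D g) (hn : 6 < n)
    (x : E3) : Integrable fun y => ((∫ v, g y v) / ‖x - y‖ ^ 3) • (x - y) := by
  have hn' : (6 : ℝ) < n := mod_cast hn
  have hint : Integrable fun y => ‖x - y‖ ^ (-2 : ℝ) * ∫ v, g y v := by
    simpa only [integral_const_mul] using (hg.integrable_rpow_norm_sub_mul two_pos
      (by simp only [finrank_euclideanSpace, Fintype.card_fin]; push_cast; linarith)
      x).integral_prod_left
  have hmeas := hg.measurable_density
  refine hint.mono (by fun_prop) (.of_forall fun y => le_of_eq ?_)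
  rw [norm_smul, norm_mul, norm_div, norm_pow, norm_norm, Real.rpow_neg (norm_nonneg _),
    Real.rpow_two, norm_inv, norm_pow, norm_norm]
  rcases eq_or_ne ‖x - y‖ 0 with h0 | h0
  · simp [h0]
  · field_simp

end IsMomentDensity

end KernelIntegrability

section RadialField

variable {n : ℕ} {D N a : ℝ} {g : E3 → E3 → ℝ}

/-- The constant `K` in the bounds `m(a) ≤ K √a` and `m(a) ≤ K N³ a²` for the mass inside the ball
of radius `a` of a density bounded by `D`. -/
def enclosedMassConstant (D : ℝ) : ℝ :=
  D * volume.real (Metric.ball (0 : E3) 1) ^ 2 + D + 1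

lemma enclosedMassConstant_pos (hD : 0 ≤ D) : 0 < enclosedMassConstant D := by
  rw [enclosedMassConstant]
  positivity

namespace IsMomentDensity

lemma bound_nonneg (hg : IsMomentDensity n D g) : 0 ≤ D :=
  (hg.nonneg 0 0).trans (hg.le_bound 0 0)

lemma enclosedMass_le_sqrt (hg : IsMomentDensity 1 D g) (hmom : velocityMoment 1 g ≤ D)
    (ha : 0 < a) :
    ∫ x in Metric.ball 0 a, ∫ v, g x v ≤ enclosedMassConstant D * √a := by
  have hD := hg.bound_nonneg
  have hsqrt : 0 < √a := Real.sqrt_pos.2 ha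
  set c := D * volume.real (Metric.ball (0 : E3) 1) ^ 2 with hc
  have hc0 : 0 ≤ c := by positivity
  rcases le_total a 1 with ha1 | ha1
  · have hsqrt1 : √a ≤ 1 := Real.sqrt_le_one.2 ha1
    calc ∫ x in Metric.ball 0 a, ∫ v, g x v
        ≤ c * (a * (√a)⁻¹) ^ 3 + ((√a)⁻¹ ^ 1)⁻¹ * velocityMoment 1 g := by
          simpa using hg.setIntegral_density_ball_le ha (inv_pos.2 hsqrt)
      _ = c * √a ^ 3 + √a * velocityMoment 1 g := by
          rw [← div_eq_mul_inv, Real.div_sqrt, pow_one, inv_inv]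
      _ ≤ c * √a + √a * D := by
          gcongr
          exact pow_le_of_le_one hsqrt.le hsqrt1 three_ne_zero
      _ ≤ enclosedMassConstant D * √a := by
          rw [enclosedMassConstant, ← hc]
          linarith
  · have hDK : D ≤ enclosedMassConstant D := by
      rw [enclosedMassConstant, ← hc]
      linarith
    calc ∫ x in Metric.ball 0 a, ∫ v, g x v
        ≤ D := (hg.setIntegral_density_le_velocityMoment _).trans hmom
      _ ≤ enclosedMassConstant D := hDK
      _ ≤ enclosedMassConstant D * √a :=
          le_mul_of_one_le_right (hD.trans hDK) (Real.one_le_sqrt.2 ha1)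

/- Velocities are cut off at `P = N / a ^ (1 / 3)`. -/
lemma enclosedMass_le_sq (hg : IsMomentDensity n D g) (hn : 6 ≤ n) (hN : 0 < N)
    (hmom : velocityMoment n g ≤ N ^ (n + 3)) (ha : 0 < a) (ha1 : a ≤ 1) :
    ∫ x in Metric.ball 0 a, ∫ v, g x v ≤ enclosedMassConstant D * N ^ 3 * a ^ 2 := by
  have hD := hg.bound_nonneg
  obtain ⟨b, hb, rfl⟩ : ∃ b : ℝ, 0 < b ∧ b ^ 3 = a :=
    ⟨a ^ ((3 : ℕ) : ℝ)⁻¹, by positivity, Real.rpow_inv_natCast_pow ha.le three_ne_zero⟩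
  have hb1 : b ≤ 1 := (pow_le_one_iff_of_nonneg hb.le three_ne_zero).1 ha1
  set c := D * volume.real (Metric.ball (0 : E3) 1) ^ 2 with hc
  calc ∫ x in Metric.ball 0 (b ^ 3), ∫ v, g x v
      ≤ c * (b ^ 3 * (N / b)) ^ 3 + ((N / b) ^ n)⁻¹ * velocityMoment n g := by
        simpa using hg.setIntegral_density_ball_le ha (div_pos hN hb)
    _ ≤ c * (b ^ 3 * (N / b)) ^ 3 + ((N / b) ^ n)⁻¹ * N ^ (n + 3) := by gcongr
    _ = N ^ 3 * (c * b ^ 6 + b ^ n) := by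
        rw [pow_add, div_pow]
        field_simp
    _ ≤ N ^ 3 * (c * b ^ 6 + b ^ 6) := by
        gcongr N ^ 3 * (_ + ?_)
        exact pow_le_pow_of_le_one hb.le hb1 hn
    _ ≤ N ^ 3 * (enclosedMassConstant D * b ^ 6) := by
        rw [← add_one_mul, enclosedMassConstant, ← hc]
        gcongr
        linarith
    _ = enclosedMassConstant D * N ^ 3 * (b ^ 3) ^ 2 := by ring

end IsMomentDensity

lemma sqrt_add_pow_three_le {a b : ℝ} (hba : b ≤ a) : √(a + b) ^ 3 ≤ 3 * √a ^ 3 := by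
  have hsqrt2 : √2 ^ 3 ≤ 3 := by
    rw [pow_succ, Real.sq_sqrt zero_le_two]
    linarith [Real.sqrt_two_lt_three_halves]
  calc √(a + b) ^ 3 ≤ √(2 * a) ^ 3 := by
        gcongr
        linarith
    _ = √2 ^ 3 * √a ^ 3 := by rw [Real.sqrt_mul zero_le_two, mul_pow]
    _ ≤ 3 * √a ^ 3 := by gcongr

lemma div_sq_le_div_sqrt_pow_three {m K : ℝ} (ha : 0 < a) (hN : 0 < N) (hK : 0 ≤ K)
    (hsqrt : m ≤ K * √a) (hsq : a ≤ (N ^ 2)⁻¹ → m ≤ K * N ^ 3 * a ^ 2) :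
    m / a ^ 2 ≤ 3 * K / √(a + (N ^ 2)⁻¹) ^ 3 := by
  rw [le_div_iff₀ (by positivity)]
  rcases le_total (N ^ 2)⁻¹ a with hle | hle
  · have hpow : a ^ 2 = √a * √a ^ 3 := by
      rw [← pow_succ', show 3 + 1 = 2 * 2 from rfl, pow_mul, Real.sq_sqrt ha.le]
    calc m / a ^ 2 * √(a + (N ^ 2)⁻¹) ^ 3
        ≤ K * √a / a ^ 2 * (3 * √a ^ 3) := by
          gcongr
          exact sqrt_add_pow_three_le hle
      _ = 3 * K := by
          rw [hpow]
          field_simp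
  · have hroot : √(a + (N ^ 2)⁻¹) ^ 3 ≤ 3 * (N⁻¹) ^ 3 := by
      have := sqrt_add_pow_three_le hle
      rwa [← inv_pow, Real.sqrt_sq (by positivity), inv_pow, add_comm] at this
    calc m / a ^ 2 * √(a + (N ^ 2)⁻¹) ^ 3
        ≤ K * N ^ 3 * a ^ 2 / a ^ 2 * (3 * (N⁻¹) ^ 3) := by
          gcongr
          exact hsq hle
      _ = 3 * K := by field_simp

lemma integral_eq_of_norm_eq_of_rotation_invariant
    (hrot : ∀ R : E3 ≃ₗᵢ[ℝ] E3, R.toLinearEquiv.det = 1 → ∀ x v, g (R x) (R v) = g x v)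
    {x y : E3} (hxy : ‖x‖ = ‖y‖) : ∫ v, g x v = ∫ v, g y v := by
  refine eq_of_norm_eq_of_rotation_invariant (g := fun x => ∫ v, g x v) (by simp)
    (fun R hR z => ?_) hxy
  rw [← R.measurePreserving.integral_comp R.toHomeomorph.measurableEmbedding]
  simp only [hrot R hR]

lemma IsMomentDensity.exists_coulombField_eq_smul_le (hg : IsMomentDensity n D g) (hn : 6 < n)
    (hrot : ∀ R : E3 ≃ₗᵢ[ℝ] E3, R.toLinearEquiv.det = 1 → ∀ x v, g (R x) (R v) = g x v)
    (hN : 1 ≤ N) (hmom_one : velocityMoment 1 g ≤ D) (hmom : velocityMoment n g ≤ N ^ (n + 3))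
    (x : E3) :
    ∃ e : ℝ, 0 ≤ e ∧ coulombField (fun y => ∫ v, g y v) x = e • x ∧
      e * ‖x‖ ≤ 3 * enclosedMassConstant D / √(‖x‖ + (N ^ 2)⁻¹) ^ 3 := by
  set m := ∫ y in Metric.ball 0 ‖x‖, ∫ v, g y v with hm
  have hm0 : 0 ≤ m := integral_nonneg fun y => integral_nonneg (hg.nonneg y)
  have hK := enclosedMassConstant_pos hg.bound_nonneg
  have hNpos : 0 < N := zero_lt_one.trans_le hN
  refine ⟨m / (4 * π * ‖x‖ ^ 3), by positivity,
    coulombField_eq_smul_of_radial hg.measurable_density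
      (fun _ _ => integral_eq_of_norm_eq_of_rotation_invariant hrot) hg.integrable_density
      (hg.integrable_coulomb_kernel hn x), ?_⟩
  rcases eq_or_ne x 0 with rfl | hx
  · rw [norm_zero, mul_zero]
    positivity
  have hr : 0 < ‖x‖ := norm_pos_iff.2 hx
  calc m / (4 * π * ‖x‖ ^ 3) * ‖x‖ = m / ‖x‖ ^ 2 / (4 * π) := by field_simp
    _ ≤ m / ‖x‖ ^ 2 := div_le_self (by positivity) (by linarith [pi_gt_three])
    _ ≤ 3 * enclosedMassConstant D / √(‖x‖ + (N ^ 2)⁻¹) ^ 3 :=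
        div_sq_le_div_sqrt_pow_three hr hNpos hK.le
          ((hg.of_le (by omega)).enclosedMass_le_sqrt hmom_one hr) fun hle =>
            hg.enclosedMass_le_sq hn.le hNpos hmom hr
              (hle.trans (inv_le_one_of_one_le₀ (one_le_pow₀ hN)))

end RadialField

section RepulsiveMotion

variable {F : Type*} [NormedAddCommGroup F]

/-- The relativistic energy `√(1 + |v|²)` of a unit-mass particle of momentum `v`; the velocity of
the particle is `(relativisticEnergy v)⁻¹ • v`, which is `vhat v` for `v : E3`. -/
def relativisticEnergy (v : F) : ℝ := √(1 + ‖v‖ ^ 2)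

lemma relativisticEnergy_pos (v : F) : 0 < relativisticEnergy v :=
  Real.sqrt_pos.2 (by positivity)

lemma norm_le_relativisticEnergy (v : F) : ‖v‖ ≤ relativisticEnergy v :=
  Real.le_sqrt_of_sq_le (le_add_of_nonneg_left zero_le_one)

lemma relativisticEnergy_le_one_add_norm (v : F) : relativisticEnergy v ≤ 1 + ‖v‖ := by
  rw [relativisticEnergy, Real.sqrt_le_left (by positivity)]
  linarith [norm_nonneg v]

lemma norm_inv_relativisticEnergy_smul_le_one [NormedSpace ℝ F] (v : F) :
    ‖(relativisticEnergy v)⁻¹ • v‖ ≤ 1 := by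
  have hpos := relativisticEnergy_pos v
  rw [norm_smul, norm_inv, Real.norm_of_nonneg hpos.le, inv_mul_le_one₀ hpos]
  exact norm_le_relativisticEnergy v

variable [InnerProductSpace ℝ F]

/-- Relativistic motion `(X, V)` on the time set `I` under the radially outward force `e s • X s`.
Derivatives are taken within `I`, so that endpoints of `I` are allowed. -/
structure IsRepulsiveMotion (e : ℝ → ℝ) (X V : ℝ → F) (I : Set ℝ) : Prop where
  position : ∀ s ∈ I, HasDerivWithinAt X ((relativisticEnergy (V s))⁻¹ • V s) I s
  momentum : ∀ s ∈ I, HasDerivWithinAt V (e s • X s) I s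
  force_nonneg : ∀ s ∈ I, 0 ≤ e s

namespace IsRepulsiveMotion

variable {e : ℝ → ℝ} {X V : ℝ → F} {I J : Set ℝ} {s t B : ℝ} {Ψ Ψ' : ℝ → ℝ}

lemma mono (h : IsRepulsiveMotion e X V I) (hJI : J ⊆ I) : IsRepulsiveMotion e X V J where
  position s hs := (h.position s (hJI hs)).mono hJI
  momentum s hs := (h.momentum s (hJI hs)).mono hJI
  force_nonneg s hs := h.force_nonneg s (hJI hs)

lemma hasDerivWithinAt_energy (h : IsRepulsiveMotion e X V I) (hs : s ∈ I) :
    HasDerivWithinAt (fun s => relativisticEnergy (V s))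
      (e s * inner ℝ (X s) (V s) / relativisticEnergy (V s)) I s := by
  refine (((h.momentum s hs).norm_sq.const_add 1).sqrt (by positivity)).congr_deriv ?_
  rw [inner_smul_right, real_inner_comm, mul_div_mul_left _ _ two_ne_zero, relativisticEnergy]

lemma hasDerivWithinAt_inner (h : IsRepulsiveMotion e X V I) (hs : s ∈ I) :
    HasDerivWithinAt (fun s => inner ℝ (X s) (V s))
      (e s * ‖X s‖ ^ 2 + (relativisticEnergy (V s))⁻¹ * ‖V s‖ ^ 2) I s := by
  refine ((h.position s hs).inner ℝ (h.momentum s hs)).congr_deriv ?_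
  rw [inner_smul_right, real_inner_smul_left, real_inner_self_eq_norm_sq,
    real_inner_self_eq_norm_sq]

lemma hasDerivWithinAt_norm (h : IsRepulsiveMotion e X V I) (hs : s ∈ I) (hX : X s ≠ 0) :
    HasDerivWithinAt (fun s => ‖X s‖)
      (inner ℝ (X s) (V s) / (relativisticEnergy (V s) * ‖X s‖)) I s := by
  have hnorm := norm_ne_zero_iff.2 hX
  have hsqrt := (h.position s hs).norm_sq.sqrt (pow_ne_zero 2 hnorm)
  simp only [Real.sqrt_sq (norm_nonneg _)] at hsqrt
  refine hsqrt.congr_deriv ?_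
  rw [inner_smul_right, mul_div_mul_left _ _ two_ne_zero, inv_mul_eq_div, div_div]

lemma continuousOn_inner (h : IsRepulsiveMotion e X V I) :
    ContinuousOn (fun s => inner ℝ (X s) (V s)) I :=
  fun _ hs => (h.hasDerivWithinAt_inner hs).continuousWithinAt

lemma monotoneOn_inner (h : IsRepulsiveMotion e X V I) (hI : Convex ℝ I) :
    MonotoneOn (fun s => inner ℝ (X s) (V s)) I := by
  refine monotoneOn_of_hasDerivWithinAt_nonneg hI h.continuousOn_inner
    (fun s hs => (h.hasDerivWithinAt_inner (interior_subset hs)).mono interior_subset)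
    fun s hs => ?_
  have := h.force_nonneg s (interior_subset hs)
  have := relativisticEnergy_pos (V s)
  positivity

lemma antitoneOn_energy (h : IsRepulsiveMotion e X V I) (hI : Convex ℝ I)
    (hinner : ∀ s ∈ I, inner ℝ (X s) (V s) ≤ 0) :
    AntitoneOn (fun s => relativisticEnergy (V s)) I :=
  antitoneOn_of_hasDerivWithinAt_nonpos hI
    (fun _ hs => (h.hasDerivWithinAt_energy hs).continuousWithinAt)
    (fun _ hs => (h.hasDerivWithinAt_energy (interior_subset hs)).mono interior_subset)
    fun s hs => div_nonpos_of_nonpos_of_nonneg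
      (mul_nonpos_of_nonneg_of_nonpos (h.force_nonneg s (interior_subset hs))
        (hinner s (interior_subset hs))) (relativisticEnergy_pos _).le

lemma antitoneOn_energy_add_potential (h : IsRepulsiveMotion e X V I) (hI : Convex ℝ I)
    (hΨ : ∀ r, 0 ≤ r → HasDerivAt Ψ (Ψ' r) r) (hforce : ∀ s ∈ I, e s * ‖X s‖ ≤ -Ψ' ‖X s‖)
    (hinner : ∀ s ∈ interior I, 0 < inner ℝ (X s) (V s)) :
    AntitoneOn (fun s => relativisticEnergy (V s) + Ψ ‖X s‖) I := by
  have hX (s : ℝ) (hs : s ∈ interior I) : X s ≠ 0 := fun h0 =>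
    (hinner s hs).ne' (by rw [h0, inner_zero_left])
  refine antitoneOn_of_hasDerivWithinAt_nonpos hI
    (f' := fun s => inner ℝ (X s) (V s) / (relativisticEnergy (V s) * ‖X s‖)
      * (e s * ‖X s‖ + Ψ' ‖X s‖)) (fun s hs => ?_) (fun s hs => ?_) fun s hs => ?_
  · exact (h.hasDerivWithinAt_energy hs).continuousWithinAt.add
      ((hΨ ‖X s‖ (norm_nonneg _)).continuousAt.comp_continuousWithinAt (f := fun s => ‖X s‖)
        (h.position s hs).continuousWithinAt.norm)
  · have hs' := interior_subset hs
    have hpotential := (hΨ ‖X s‖ (norm_nonneg _)).comp_hasDerivWithinAt (h := fun s => ‖X s‖) s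
      (h.hasDerivWithinAt_norm hs' (hX s hs))
    refine (((h.hasDerivWithinAt_energy hs').add hpotential).mono interior_subset).congr_deriv ?_
    have hnorm := norm_ne_zero_iff.2 (hX s hs)
    have henergy := (relativisticEnergy_pos (V s)).ne'
    field_simp
  · have hpos := hinner s hs
    have henergy := relativisticEnergy_pos (V s)
    exact mul_nonpos_of_nonneg_of_nonpos (by positivity)
      (by linarith [hforce s (interior_subset hs)])

/- Since `⟪X, V⟫` is monotone, the motion is first incoming, when energy is lost, and then
outgoing, when the energy gain is paid for by the potential `Ψ`. -/
lemma energy_le (h : IsRepulsiveMotion e X V (Icc 0 t)) (ht : 0 ≤ t)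
    (hΨ : ∀ r, 0 ≤ r → HasDerivAt Ψ (Ψ' r) r)
    (hforce : ∀ s ∈ Icc 0 t, e s * ‖X s‖ ≤ -Ψ' ‖X s‖)
    (hΨ_mem : ∀ r, 0 ≤ r → Ψ r ∈ Icc 0 B) :
    relativisticEnergy (V t) ≤ relativisticEnergy (V 0) + B := by
  have houtgoing (τ : ℝ) (hτ : τ ∈ Icc 0 t) (hpos : ∀ s ∈ Ioo τ t, 0 < inner ℝ (X s) (V s)) :
      relativisticEnergy (V t) ≤ relativisticEnergy (V τ) + B := by
    have hsub : Icc τ t ⊆ Icc 0 t := Icc_subset_Icc_left hτ.1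
    have hanti := (h.mono hsub).antitoneOn_energy_add_potential (convex_Icc τ t) hΨ
      (fun s hs => hforce s (hsub hs)) (by rwa [interior_Icc])
      (left_mem_Icc.2 hτ.2) (right_mem_Icc.2 hτ.2) hτ.2
    linarith [(hΨ_mem ‖X τ‖ (norm_nonneg _)).2, (hΨ_mem ‖X t‖ (norm_nonneg _)).1]
  by_cases hincoming : ∃ s ∈ Icc 0 t, inner ℝ (X s) (V s) ≤ 0
  · have hcompact : IsCompact (Icc 0 t ∩ (fun s => inner ℝ (X s) (V s)) ⁻¹' Iic 0) :=
      isCompact_Icc.of_isClosed_subset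
        (h.continuousOn_inner.preimage_isClosed_of_isClosed isClosed_Icc isClosed_Iic)
        inter_subset_left
    obtain ⟨τ, ⟨hτ, hτ_inner⟩, hτ_last⟩ := hcompact.exists_isGreatest hincoming
    have hsub : Icc 0 τ ⊆ Icc 0 t := Icc_subset_Icc_right hτ.2
    have hloss : relativisticEnergy (V τ) ≤ relativisticEnergy (V 0) :=
      (h.mono hsub).antitoneOn_energy (convex_Icc 0 τ)
        (fun s hs => (h.monotoneOn_inner (convex_Icc 0 t) (hsub hs) hτ hs.2).trans hτ_inner)
        (left_mem_Icc.2 hτ.1) (right_mem_Icc.2 hτ.1) hτ.1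
    refine (houtgoing τ hτ fun s hs => ?_).trans (by linarith)
    by_contra! hs_inner
    exact hs.1.not_ge (hτ_last ⟨⟨hτ.1.trans hs.1.le, hs.2.le⟩, hs_inner⟩)
  · push Not at hincoming
    exact houtgoing 0 ⟨le_rfl, ht⟩ fun s hs => hincoming s (Ioo_subset_Icc_self hs)

lemma norm_position_le (h : IsRepulsiveMotion e X V (Icc 0 t)) (ht : 0 ≤ t) :
    ‖X t‖ ≤ ‖X 0‖ + t := by
  have hdist : ‖X t - X 0‖ ≤ 1 * ‖t - 0‖ :=
    (convex_Icc 0 t).norm_image_sub_le_of_norm_hasDerivWithin_le h.position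
      (fun s _ => norm_inv_relativisticEnergy_smul_le_one (V s))
      (left_mem_Icc.2 ht) (right_mem_Icc.2 ht)
  rw [one_mul, sub_zero, Real.norm_of_nonneg ht] at hdist
  linarith [norm_le_norm_add_norm_sub' (X t) (X 0)]

end IsRepulsiveMotion

lemma hasDerivAt_div_sqrt_add {K r₀ r : ℝ} (hr : 0 < r + r₀) :
    HasDerivAt (fun r => 2 * K / √(r + r₀)) (-(K / √(r + r₀) ^ 3)) r := by
  have hsqrt : 0 < √(r + r₀) := Real.sqrt_pos.2 hr
  refine ((hasDerivAt_const r (2 * K)).div (((hasDerivAt_id r).add_const r₀).sqrt hr.ne')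
    hsqrt.ne').congr_deriv ?_
  simp only [id_eq]
  field_simp
  ring

lemma IsRepulsiveMotion.energy_le_of_force_le {e : ℝ → ℝ} {X V : ℝ → F} {t K N : ℝ}
    (h : IsRepulsiveMotion e X V (Icc 0 t)) (ht : 0 ≤ t) (hK : 0 ≤ K) (hN : 0 < N)
    (hforce : ∀ s ∈ Icc 0 t, e s * ‖X s‖ ≤ K / √(‖X s‖ + (N ^ 2)⁻¹) ^ 3) :
    relativisticEnergy (V t) ≤ relativisticEnergy (V 0) + 2 * K * N := by
  have hcore : √((N ^ 2)⁻¹) = N⁻¹ := by rw [← inv_pow, Real.sqrt_sq (by positivity)]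
  refine h.energy_le ht (Ψ := fun r => 2 * K / √(r + (N ^ 2)⁻¹))
    (fun r hr => hasDerivAt_div_sqrt_add (by positivity))
    (fun s hs => (hforce s hs).trans_eq (neg_neg _).symm) fun r hr => ⟨by positivity, ?_⟩
  calc 2 * K / √(r + (N ^ 2)⁻¹) ≤ 2 * K / √((N ^ 2)⁻¹) := by
        gcongr
        exact le_add_of_nonneg_left hr
    _ = 2 * K * N := by rw [hcore, div_inv_eq_mul]

end RepulsiveMotion

section MajorityControl

/-- The enlarged moment `(1 + t)²ⁿ + sup_{s ∈ [0,t]} Mₙ(s)`, where `Mₙ` is the `n`-th velocity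
moment; `tildeMr f t` is `enlargedMoment 10 f t`. -/
def enlargedMoment (n : ℕ) (f : ℝ → E3 → E3 → ℝ) (t : ℝ) : ℝ :=
  (1 + t) ^ (2 * n) + sSup ((fun s => velocityMoment n (f s)) '' Icc 0 t)

variable {n : ℕ} {D N t : ℝ} {f : ℝ → E3 → E3 → ℝ}

lemma one_add_pow_le_enlargedMoment (hf : ∀ s ∈ Icc 0 t, IsMomentDensity n D (f s)) :
    (1 + t) ^ (2 * n) ≤ enlargedMoment n f t := by
  refine le_add_of_nonneg_right (Real.sSup_nonneg ?_)
  rintro _ ⟨s, hs, rfl⟩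
  exact (hf s hs).velocityMoment_nonneg

lemma one_le_enlargedMoment (ht : 0 ≤ t) (hf : ∀ s ∈ Icc 0 t, IsMomentDensity n D (f s)) :
    1 ≤ enlargedMoment n f t :=
  (one_le_pow₀ (le_add_of_nonneg_right ht)).trans (one_add_pow_le_enlargedMoment hf)

lemma velocityMoment_le_enlargedMoment (ht : 0 ≤ t)
    (hbdd : BddAbove ((fun s => velocityMoment n (f s)) '' Icc 0 t)) {s : ℝ} (hs : s ∈ Icc 0 t) :
    velocityMoment n (f s) ≤ enlargedMoment n f t :=
  (le_csSup hbdd (mem_image_of_mem _ hs)).trans (le_add_of_nonneg_left (by positivity))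

lemma exists_isRepulsiveMotion (hn : 6 < n) (hN : 1 ≤ N)
    (hf : ∀ s ∈ Icc 0 t, IsMomentDensity n D (f s))
    (hrot : ∀ s ∈ Icc 0 t, ∀ R : E3 ≃ₗᵢ[ℝ] E3, R.toLinearEquiv.det = 1 →
      ∀ x v, f s (R x) (R v) = f s x v)
    (hmom_one : ∀ s ∈ Icc 0 t, velocityMoment 1 (f s) ≤ D)
    (hmom : ∀ s ∈ Icc 0 t, velocityMoment n (f s) ≤ N ^ (n + 3)) {X V : ℝ → E3}
    (hX : ∀ s ∈ Icc 0 t, HasDerivWithinAt X (vhat (V s)) (Icc 0 t) s)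
    (hV : ∀ s ∈ Icc 0 t, HasDerivWithinAt V (rvpField f s (X s)) (Icc 0 t) s) :
    ∃ e : ℝ → ℝ, IsRepulsiveMotion e X V (Icc 0 t) ∧ ∀ s ∈ Icc 0 t,
      e s * ‖X s‖ ≤ 3 * enclosedMassConstant D / √(‖X s‖ + (N ^ 2)⁻¹) ^ 3 := by
  have hfield (s : ℝ) (hs : s ∈ Icc 0 t) : ∃ e : ℝ, 0 ≤ e ∧ rvpField f s (X s) = e • X s ∧
      e * ‖X s‖ ≤ 3 * enclosedMassConstant D / √(‖X s‖ + (N ^ 2)⁻¹) ^ 3 :=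
    (hf s hs).exists_coulombField_eq_smul_le hn (hrot s hs) hN (hmom_one s hs) (hmom s hs) (X s)
  choose! e he_nonneg he_field he_bound using hfield
  exact ⟨e, ⟨hX, fun s hs => he_field s hs ▸ hV s hs, he_nonneg⟩, he_bound⟩

theorem radial_majority_control_general {n : ℕ} (hn : 6 < n) (D : ℝ) :
    ∃ C : ℝ, ∀ (t : ℝ) (f : ℝ → E3 → E3 → ℝ), 0 ≤ t →
      (∀ s ∈ Icc 0 t, IsMomentDensity n D (f s)) →
      (∀ s ∈ Icc 0 t, ∀ R : E3 ≃ₗᵢ[ℝ] E3, R.toLinearEquiv.det = 1 →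
        ∀ x v, f s (R x) (R v) = f s x v) →
      (∀ s ∈ Icc 0 t, velocityMoment 1 (f s) ≤ D) →
      BddAbove ((fun s => velocityMoment n (f s)) '' Icc 0 t) →
      ∀ X V : ℝ → E3,
        (∀ s ∈ Icc 0 t, HasDerivWithinAt X (vhat (V s)) (Icc 0 t) s) →
        (∀ s ∈ Icc 0 t, HasDerivWithinAt V (rvpField f s (X s)) (Icc 0 t) s) →
        ‖X 0‖ + ‖V 0‖ ≤ enlargedMoment n f t ^ (1 / (2 * n) : ℝ) →
        ‖X t‖ ≤ C * enlargedMoment n f t ^ (1 / (2 * n) : ℝ) ∧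
        ‖V t‖ ≤ C * enlargedMoment n f t ^ (1 / (n + 3) : ℝ) := by
  refine ⟨2 + 6 * enclosedMassConstant D, fun t f ht hf hrot hmom_one hbdd X V hX hV hinit => ?_⟩
  have hK := enclosedMassConstant_pos (hf 0 ⟨le_rfl, ht⟩).bound_nonneg
  have hpow := one_add_pow_le_enlargedMoment hf
  have hM := one_le_enlargedMoment ht hf
  have hmom (s : ℝ) (hs : s ∈ Icc 0 t) := velocityMoment_le_enlargedMoment ht hbdd hs
  generalize enlargedMoment n f t = M at *
  set A := M ^ (1 / (2 * n) : ℝ) with hA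
  set N := M ^ (1 / (n + 3) : ℝ) with hN
  have hn' : (6 : ℝ) < n := mod_cast hn
  have htA : 1 + t ≤ A := by
    rw [hA, one_div, Real.le_rpow_inv_iff_of_pos (by positivity) (by positivity) (by positivity)]
    exact_mod_cast hpow
  have hAN : A ≤ N := Real.rpow_le_rpow_of_exponent_le hM (by gcongr; linarith)
  have hN1 : 1 ≤ N := Real.one_le_rpow hM (by positivity)
  have hNM : N ^ (n + 3) = M := by
    rw [hN, one_div, ← Real.rpow_natCast, Nat.cast_add, Nat.cast_ofNat,
      Real.rpow_inv_rpow (by positivity) (by positivity)]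
  obtain ⟨e, hmotion, hforce⟩ := exists_isRepulsiveMotion hn hN1 hf hrot hmom_one
    (by rwa [hNM]) hX hV
  have hKA : 0 ≤ enclosedMassConstant D * A := by positivity
  have henergy := hmotion.energy_le_of_force_le ht (by positivity) (by positivity) hforce
  constructor
  · linarith [hmotion.norm_position_le ht, norm_nonneg (V 0)]
  · linarith [norm_le_relativisticEnergy (V t), relativisticEnergy_le_one_add_norm (V 0),
      norm_nonneg (X 0)]

lemma IsRVPSolution.isMomentDensity {I : Set ℝ} (hsol : IsRVPSolution I f) {s : ℝ} (hs : s ∈ I)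
    (hle : ∀ x v, f s x v ≤ D)
    (hint : Integrable fun p : E3 × E3 => (1 + ‖p.2‖) ^ n * f s p.1 p.2) :
    IsMomentDensity n D (f s) where
  measurable := Continuous.measurable <|
    hsol.2.1.continuousOn.comp_continuous (f := fun p : E3 × E3 => (s, p)) (by fun_prop)
      fun _ => ⟨hs, trivial⟩
  nonneg := hsol.1 s hs
  le_bound := hle
  integrable_moment := hint

lemma one_div_thirteen_le_velocity_exponent {δ : ℝ} (hδ0 : 0 ≤ δ) (hδ3 : δ < 3) :
    (1 : ℝ) / 13 ≤ (5 + 2 * δ) / ((6 - 2 * δ) * 9) := by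
  rw [div_le_div_iff₀ (by norm_num) (by linarith)]
  linarith

end MajorityControl

/-- Control of the majority set in the radial case: a characteristic starting (at time 0)
in the ball of radius `\tilde M^r(t)^{1/(2n_r)}` of phase space satisfies
`|X(t)| ≤ C \tilde M^r(t)^{1/(2n_r)}` and
`|V(t)| ≤ C \tilde M^r(t)^{(5+2δ)/((6-2δ)(n_r-1))}`, with `n_r = 10`. -/
theorem radial_majority_control (δ D : ℝ)
    (hδ : δ ∈ Set.Ioo (0 : ℝ) (((10 : ℝ) ^ (10 : ℕ))⁻¹)) (hD : 0 < D) :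
    ∃ C : ℝ, ∀ (T : ℝ) (f : ℝ → E3 → E3 → ℝ),
      IsRVPSolution (Set.Ico 0 T) f →
      (∀ t ∈ Set.Ico (0 : ℝ) T, ∀ R : E3 ≃ₗᵢ[ℝ] E3, R.toLinearEquiv.det = 1 →
        ∀ x v, f t (R x) (R v) = f t x v) →
      (∀ t ∈ Set.Ico (0 : ℝ) T, ∀ x v, f t x v ≤ D) →
      (∀ t ∈ Set.Ico (0 : ℝ) T,
        Integrable (fun p : E3 × E3 => (1 + ‖p.2‖) * f t p.1 p.2) volume) →
      (∀ t ∈ Set.Ico (0 : ℝ) T, (∫ p : E3 × E3, (1 + ‖p.2‖) * f t p.1 p.2) ≤ D) →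
      (∀ t ∈ Set.Ico (0 : ℝ) T,
        Integrable (fun p : E3 × E3 => (1 + ‖p.2‖) ^ (10 : ℕ) * f t p.1 p.2) volume) →
      ∀ t ∈ Set.Ico (0 : ℝ) T,
        BddAbove (momentTen f '' Set.Icc 0 t) →
        ∀ X V : ℝ → E3,
          (∀ s ∈ Set.Icc (0 : ℝ) t, HasDerivAt X (vhat (V s)) s) →
          (∀ s ∈ Set.Icc (0 : ℝ) t, HasDerivAt V (rvpField f s (X s)) s) →
          ‖X 0‖ + ‖V 0‖ ≤ tildeMr f t ^ ((1 : ℝ) / 20) →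
          ‖X t‖ ≤ C * tildeMr f t ^ ((1 : ℝ) / 20) ∧
          ‖V t‖ ≤ C * tildeMr f t ^ ((5 + 2 * δ) / ((6 - 2 * δ) * 9)) := by
  obtain ⟨C, hC⟩ := radial_majority_control_general (n := 10) (by norm_num) D
  refine ⟨C, fun T f hsol hrot hle _ hmom_one hint t ht hbdd X V hX hV hinit => ?_⟩
  have hsub : Icc 0 t ⊆ Ico 0 T := Icc_subset_Ico_right ht.2
  have hf (s : ℝ) (hs : s ∈ Icc 0 t) : IsMomentDensity 10 D (f s) :=
    hsol.isMomentDensity (hsub hs) (hle s (hsub hs)) (hint s (hsub hs))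
  have hM : 1 ≤ tildeMr f t := one_le_enlargedMoment ht.1 hf
  have hcontrol := hC t f ht.1 hf (fun s hs => hrot s (hsub hs))
    (fun s hs => by simpa [velocityMoment] using hmom_one s (hsub hs)) hbdd X V
    (fun s hs => (hX s hs).hasDerivWithinAt) (fun s hs => (hV s hs).hasDerivWithinAt)
  rw [← show tildeMr f t = enlargedMoment 10 f t from rfl,
    show (1 / (2 * (10 : ℕ)) : ℝ) = 1 / 20 by norm_num,
    show (1 / ((10 : ℕ) + 3) : ℝ) = 1 / 13 by norm_num] at hcontrol
  obtain ⟨hXt, hVt⟩ := hcontrol hinit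
  have hC0 : 0 ≤ C := nonneg_of_mul_nonneg_left ((norm_nonneg _).trans hVt) (by positivity)
  refine ⟨hXt, hVt.trans ?_⟩
  exact mul_le_mul_of_nonneg_left (Real.rpow_le_rpow_of_exponent_le hM
    (one_div_thirteen_le_velocity_exponent hδ.1.le (hδ.2.trans (by norm_num)))) hC0
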